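/- Fix a positive integer K and positive reals ν_S, μ_D, μ_R, ν_R, E_R, E_S, β_EI, β_SR. For positive reals N_R, N_T define f(N_R, N_T) = min{ 1/(ν_S + (K/N_R)·μ_R·ν_S + (K/N_R)·ν_R·(E_R β_EI)/(E_S β_SR)), 1/(μ_D + (K/N_T)·ν_R·(1 + μ_D)) }. Then f(N_R, N_T) ≤ min{1/ν_S, 1/μ_D} for all N_R, N_T > 0, and f(N_R, N_T) → min{1/ν_S, 1/μ_D} as min{N_R, N_T} → ∞ (i.e., for every ε > 0 there exists N₀ such that |f(N_R,N_T) − min{1/ν_S, 1/μ_D}| < ε whenever N_R ≥ N₀ and N_T ≥ N₀). -/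

import Mathlib

section HopSINR

open Filter Topology

variable {𝕜 : Type*} [Field 𝕜]

/-- The effective SINR of one hop of the relay channel: `a` is the relative power of the hardware
distortion, which does not depend on the antenna array, and `c / N` that of the interference left
after averaging over `N` antennas. The number of antennas ranges over the whole field. -/
def hopSINR (a c N : 𝕜) : 𝕜 := 1 / (a + c / N)

variable [LinearOrder 𝕜] [IsStrictOrderedRing 𝕜]

theorem hopSINR_le_one_div {a c N : 𝕜} (ha : 0 < a) (hc : 0 ≤ c) (hN : 0 ≤ N) :
    hopSINR a c N ≤ 1 / a :=
  one_div_le_one_div_of_le ha (le_add_of_nonneg_right (div_nonneg hc hN))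

variable [TopologicalSpace 𝕜] [OrderTopology 𝕜]

theorem tendsto_hopSINR_atTop {a : 𝕜} (ha : a ≠ 0) (c : 𝕜) :
    Tendsto (hopSINR a c) atTop (𝓝 (1 / a)) := by
  have hdenom : Tendsto (fun N : 𝕜 => a + c / N) atTop (𝓝 a) := by
    simpa only [add_zero, id] using (tendsto_const_nhds.div_atTop tendsto_id).const_add a
  exact tendsto_const_nhds.div hdenom ha

theorem tendsto_min_hopSINR_atTop {a b : 𝕜} (ha : a ≠ 0) (hb : b ≠ 0) (c d : 𝕜) :
    Tendsto (fun N : 𝕜 × 𝕜 => min (hopSINR a c N.1) (hopSINR b d N.2)) atTop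
      (𝓝 (min (1 / a) (1 / b))) := by
  rw [← prod_atTop_atTop_eq]
  exact ((tendsto_hopSINR_atTop ha c).comp tendsto_fst).min
    ((tendsto_hopSINR_atTop hb d).comp tendsto_snd)

end HopSINR

/-- The "ceiling effect" of equation (3-7): with `K` and the hardware
impairment/power/fading parameters fixed and positive, the effective SINR
`f(N_R,N_T) = min{ 1/(ν_S + (K/N_R)μ_Rν_S + (K/N_R)ν_R(E_Rβ_EI)/(E_Sβ_SR)),
1/(μ_D + (K/N_T)ν_R(1+μ_D)) }` is bounded above by `min{1/ν_S, 1/μ_D}` for all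
`N_R, N_T > 0`, and converges to `min{1/ν_S, 1/μ_D}` as `min{N_R, N_T} → ∞`. -/
theorem stmt_15 (K : ℕ) (hK : 0 < K)
    (νS μD μR νR ER ES βEI βSR : ℝ)
    (hνS : 0 < νS) (hμD : 0 < μD) (hμR : 0 < μR) (hνR : 0 < νR)
    (hER : 0 < ER) (hES : 0 < ES) (hβEI : 0 < βEI) (hβSR : 0 < βSR)
    (f : ℝ → ℝ → ℝ)
    (hf : ∀ NR NT : ℝ, f NR NT =
      min (1 / (νS + ((K : ℝ) / NR) * μR * νS + ((K : ℝ) / NR) * νR * (ER * βEI) / (ES * βSR)))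
          (1 / (μD + ((K : ℝ) / NT) * νR * (1 + μD)))) :
    (∀ NR NT : ℝ, 0 < NR → 0 < NT → f NR NT ≤ min (1 / νS) (1 / μD)) ∧
    (∀ ε : ℝ, 0 < ε → ∃ N₀ : ℝ, ∀ NR NT : ℝ, N₀ ≤ NR → N₀ ≤ NT →
      |f NR NT - min (1 / νS) (1 / μD)| < ε) := by
  set c : ℝ := K * (μR * νS + νR * (ER * βEI) / (ES * βSR)) with hc_def
  set d : ℝ := K * (νR * (1 + μD)) with hd_def
  have hc : 0 ≤ c := by positivity
  have hd : 0 ≤ d := by positivity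
  have hf_eq (NR NT : ℝ) : f NR NT = min (hopSINR νS c NR) (hopSINR μD d NT) := by
    rw [hf, hopSINR, hopSINR, hc_def, hd_def]
    congr 2 <;> ring
  simp only [hf_eq]
  refine ⟨fun NR NT hNR hNT => ?upper_bound, fun ε hε => ?limit⟩
  case upper_bound =>
    exact min_le_min (hopSINR_le_one_div hνS hc hNR.le) (hopSINR_le_one_div hμD hd hNT.le)
  case limit =>
    obtain ⟨⟨A, B⟩, hAB⟩ :=
      Metric.tendsto_atTop.1 (tendsto_min_hopSINR_atTop hνS.ne' hμD.ne' c d) ε hε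
    exact ⟨max A B, fun NR NT hNR hNT =>
      hAB (NR, NT) ⟨le_of_max_le_left hNR, le_of_max_le_right hNT⟩⟩
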